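/- Let Ω and Ω̃ be open subsets of ℝ³ and F : Ω → Ω̃ a C² diffeomorphism with det DF(y) > 0 for all y ∈ Ω, and write M(y) = DF(y) for its Jacobian matrix. Let E : Ω → ℂ³ be a C¹ vector field and define the pull-back field Ẽ : Ω̃ → ℂ³ by Ẽ(x) = (M(F⁻¹(x))ᵀ)⁻¹ E(F⁻¹(x)). Then Ẽ is C¹ and for every x ∈ Ω̃, curl Ẽ(x) = (1/det M(y)) · M(y) · (curl E)(y) with y = F⁻¹(x). -/

import Mathlib

/-!
Write `N = DG`. Since `F ∘ G = id` on `Ω̃`, the chain rule gives `DF(G x) * N(x) = 1`, so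
`Ẽ(x) = N(x)ᵀ E(G x)`: `Ẽ` is the pull-back of the 1-form `E` along `G`. As `G` is `C²`, this
expression is `C¹`, and `∂ᵢ Ẽⱼ = ∑ₖ ∂ᵢ∂ⱼGₖ · Eₖ + ∑ₖₗ Nₖⱼ Nₗᵢ ∂ₗEₖ`. The first sum is symmetric
in `i, j` and cancels in the curl; what remains is `curl Ẽ = adj(N) curl E`, and
`adj(N) = det N • N⁻¹ = (det DF)⁻¹ • DF`.
-/


/-- The Jacobian matrix of a map `F : ℝ³ → ℝ³` at a point `y`. -/
noncomputable def jac (F : (Fin 3 → ℝ) → (Fin 3 → ℝ)) (y : Fin 3 → ℝ) :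
    Matrix (Fin 3) (Fin 3) ℝ :=
  Matrix.of fun i j => fderiv ℝ F y (Pi.single j 1) i

/-- Partial derivative `∂ᵢ g` of a scalar (complex-valued) function on ℝ³. -/
noncomputable def pd (i : Fin 3) (g : (Fin 3 → ℝ) → ℂ) (x : Fin 3 → ℝ) : ℂ :=
  fderiv ℝ g x (Pi.single i 1)

/-- The curl of a complex vector field on ℝ³:
`curl E = (∂₂E₃ − ∂₃E₂, ∂₃E₁ − ∂₁E₃, ∂₁E₂ − ∂₂E₁)`. -/
noncomputable def curl3 (E : (Fin 3 → ℝ) → (Fin 3 → ℂ)) (x : Fin 3 → ℝ) : Fin 3 → ℂ :=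
  ![pd 1 (fun y => E y 2) x - pd 2 (fun y => E y 1) x,
    pd 2 (fun y => E y 0) x - pd 0 (fun y => E y 2) x,
    pd 0 (fun y => E y 1) x - pd 1 (fun y => E y 0) x]

/-- A real 3×3 matrix acting componentwise on ℂ³. -/
noncomputable def mulVecC (M : Matrix (Fin 3) (Fin 3) ℝ) (v : Fin 3 → ℂ) : Fin 3 → ℂ :=
  (M.map (fun a => (a : ℂ))).mulVec v

lemma jac_eq_toMatrix' (F : (Fin 3 → ℝ) → (Fin 3 → ℝ)) (y : Fin 3 → ℝ) :
    jac F y = LinearMap.toMatrix' (fderiv ℝ F y : (Fin 3 → ℝ) →ₗ[ℝ] (Fin 3 → ℝ)) := by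
  ext i j
  simp [jac, LinearMap.toMatrix'_apply]

lemma jac_mul_jac_of_leftInverse {Ωt : Set (Fin 3 → ℝ)} (hΩt : IsOpen Ωt)
    {F G : (Fin 3 → ℝ) → (Fin 3 → ℝ)} (hFG : ∀ x ∈ Ωt, F (G x) = x)
    {x : Fin 3 → ℝ} (hx : x ∈ Ωt) (hF : DifferentiableAt ℝ F (G x))
    (hG : DifferentiableAt ℝ G x) : jac F (G x) * jac G x = 1 := by
  have h : (fun z => F (G z)) =ᶠ[nhds x] id :=
    Filter.eventually_of_mem (hΩt.mem_nhds hx) hFG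
  have h2 : (fderiv ℝ F (G x)).comp (fderiv ℝ G x) = ContinuousLinearMap.id ℝ _ := by
    rw [← fderiv_comp x hF hG, ← fderiv_id (x := x)]
    exact h.fderiv_eq
  rw [jac_eq_toMatrix', jac_eq_toMatrix', ← LinearMap.toMatrix'_comp,
    ← ContinuousLinearMap.toLinearMap_comp, h2]
  simp

lemma fderiv_eq_sum (f : (Fin 3 → ℝ) →L[ℝ] ℂ) (v : Fin 3 → ℝ) :
    f v = ∑ l, (v l : ℂ) * f (Pi.single l 1) := by
  conv_lhs => rw [pi_eq_sum_univ' v]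
  simp [map_sum]

/-- The entries of the Jacobian matrix of a `C²` map are `C¹`. -/
lemma contDiffAt_jac {G : (Fin 3 → ℝ) → (Fin 3 → ℝ)} {x : Fin 3 → ℝ}
    (hG : ContDiffAt ℝ 2 G x) (k j : Fin 3) :
    ContDiffAt ℝ 1 (fun z => ((jac G z k j : ℝ) : ℂ)) x := by
  have h : ContDiffAt ℝ 1 (fderiv ℝ G) x := hG.fderiv_right (by norm_num)
  have h2 : ContDiffAt ℝ 1 (fun z => fderiv ℝ G z (Pi.single j 1)) x :=
    h.clm_apply contDiffAt_const
  exact Complex.ofRealCLM.contDiff.contDiffAt.comp x (contDiffAt_pi.1 h2 k)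

lemma pd_jac {G : (Fin 3 → ℝ) → (Fin 3 → ℝ)} {x : Fin 3 → ℝ}
    (hG : ContDiffAt ℝ 2 G x) (i k j : Fin 3) :
    pd i (fun z => ((jac G z k j : ℝ) : ℂ)) x =
      ((fderiv ℝ (fderiv ℝ G) x (Pi.single i 1) (Pi.single j 1) k : ℝ) : ℂ) := by
  have h : ContDiffAt ℝ 1 (fderiv ℝ G) x := hG.fderiv_right (by norm_num)
  have h1 : HasFDerivAt (fderiv ℝ G) (fderiv ℝ (fderiv ℝ G) x) x :=
    (h.differentiableAt (by norm_num)).hasFDerivAt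
  have h2 := h1.clm_apply (hasFDerivAt_const (Pi.single j 1 : Fin 3 → ℝ) x)
  have h3 := (Complex.ofRealCLM.hasFDerivAt (x := jac G x k j)).comp x (hasFDerivAt_pi'.1 h2 k)
  have h4 : fderiv ℝ (fun z => ((jac G z k j : ℝ) : ℂ)) x = _ := h3.fderiv
  rw [pd, h4]
  simp

/-- Symmetry of second derivatives, phrased through the Jacobian matrix. -/
lemma pd_jac_comm {G : (Fin 3 → ℝ) → (Fin 3 → ℝ)} {x : Fin 3 → ℝ}
    (hG : ContDiffAt ℝ 2 G x) (i k j : Fin 3) :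
    pd i (fun z => ((jac G z k j : ℝ) : ℂ)) x = pd j (fun z => ((jac G z k i : ℝ) : ℂ)) x := by
  have hs : IsSymmSndFDerivAt ℝ G x := hG.isSymmSndFDerivAt (by simp)
  rw [pd_jac hG, pd_jac hG, hs.eq]

lemma pd_comp {G : (Fin 3 → ℝ) → (Fin 3 → ℝ)} {e : (Fin 3 → ℝ) → ℂ} {x : Fin 3 → ℝ}
    (hG : DifferentiableAt ℝ G x) (he : DifferentiableAt ℝ e (G x)) (i : Fin 3) :
    pd i (fun z => e (G z)) x = ∑ l, ((jac G x l i : ℝ) : ℂ) * pd l e (G x) := by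
  have h : fderiv ℝ (fun z => e (G z)) x = _ := fderiv_comp x he hG
  rw [pd, h, ContinuousLinearMap.comp_apply, fderiv_eq_sum]
  rfl

/-- First derivatives of the pull-back of the 1-form `E` along `G`. -/
lemma pd_pullback {G : (Fin 3 → ℝ) → (Fin 3 → ℝ)} {E : (Fin 3 → ℝ) → (Fin 3 → ℂ)}
    {x : Fin 3 → ℝ} (hG : ContDiffAt ℝ 2 G x) (hE : DifferentiableAt ℝ E (G x)) (i j : Fin 3) :
    pd i (fun z => ∑ k, ((jac G z k j : ℝ) : ℂ) * E (G z) k) x =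
      ∑ k, (pd i (fun z => ((jac G z k j : ℝ) : ℂ)) x * E (G x) k +
        ((jac G x k j : ℝ) : ℂ) *
          ∑ l, ((jac G x l i : ℝ) : ℂ) * pd l (fun y => E y k) (G x)) := by
  have hGd : DifferentiableAt ℝ G x := hG.differentiableAt (by norm_num)
  have hEk (k : Fin 3) : DifferentiableAt ℝ (fun y => E y k) (G x) := differentiableAt_pi.1 hE k
  have hEG (k : Fin 3) : DifferentiableAt ℝ (fun z => E (G z) k) x :=
    (hEk k).comp x hGd
  have hN (k : Fin 3) : DifferentiableAt ℝ (fun z => ((jac G z k j : ℝ) : ℂ)) x :=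
    (contDiffAt_jac hG k j).differentiableAt (by norm_num)
  have hs := HasFDerivAt.fun_sum (u := Finset.univ)
    fun k _ => (hN k).hasFDerivAt.fun_mul (hEG k).hasFDerivAt
  rw [pd, hs.fderiv, sum_apply]
  refine Finset.sum_congr rfl fun k _ => ?_
  rw [← pd_comp hGd (hEk k)]
  simp only [pd, add_apply, smul_apply, smul_eq_mul]
  ring

/-- The curl of a pull-back along `G` is the adjugate of `DG` applied to the curl. -/
lemma curl3_pullback_adjugate {G : (Fin 3 → ℝ) → (Fin 3 → ℝ)} {E : (Fin 3 → ℝ) → (Fin 3 → ℂ)}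
    {x : Fin 3 → ℝ} (hG : ContDiffAt ℝ 2 G x) (hE : DifferentiableAt ℝ E (G x)) :
    curl3 (fun z j => ∑ k, ((jac G z k j : ℝ) : ℂ) * E (G z) k) x =
      mulVecC (jac G x).adjugate (curl3 E (G x)) := by
  have h10 := fun k => pd_jac_comm hG 1 k 0
  have h20 := fun k => pd_jac_comm hG 2 k 0
  have h21 := fun k => pd_jac_comm hG 2 k 1
  rw [Matrix.adjugate_fin_three]
  ext a
  fin_cases a <;>
  · simp only [curl3, pd_pullback hG hE]
    simp only [mulVecC, h10, h20, h21, Fin.sum_univ_three,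
      Matrix.mulVec, dotProduct, Matrix.map_apply, Matrix.of_apply, Matrix.cons_val',
      Matrix.cons_val, Fin.zero_eta, Fin.mk_one, Fin.reduceFinMk, Fin.isValue]
    push_cast
    ring

/-- Transformation rule for the curl under a C² orientation-preserving
diffeomorphism `F : Ω → Ω̃` (with inverse `G`).  If `Ẽ(x) = (M(F⁻¹(x))ᵀ)⁻¹ E(F⁻¹(x))`
with `M = DF`, then `Ẽ` is C¹ on `Ω̃` and
`curl Ẽ(x) = (1/det M(y)) · M(y) · (curl E)(y)` with `y = F⁻¹(x)`. -/
theorem curl_pullback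
    (Ω Ωt : Set (Fin 3 → ℝ)) (hΩ : IsOpen Ω) (hΩt : IsOpen Ωt)
    (F G : (Fin 3 → ℝ) → (Fin 3 → ℝ))
    (hF : ContDiffOn ℝ 2 F Ω) (hG : ContDiffOn ℝ 2 G Ωt)
    (hFmaps : Set.MapsTo F Ω Ωt) (hGmaps : Set.MapsTo G Ωt Ω)
    (hGF : ∀ y ∈ Ω, G (F y) = y) (hFG : ∀ x ∈ Ωt, F (G x) = x)
    (hdet : ∀ y ∈ Ω, 0 < (jac F y).det)
    (E : (Fin 3 → ℝ) → (Fin 3 → ℂ)) (hE : ContDiffOn ℝ 1 E Ω)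
    (Et : (Fin 3 → ℝ) → (Fin 3 → ℂ))
    (hEt : ∀ x ∈ Ωt, Et x = mulVecC ((jac F (G x)).transpose)⁻¹ (E (G x))) :
    ContDiffOn ℝ 1 Et Ωt ∧
      ∀ x ∈ Ωt, curl3 Et x =
        (((jac F (G x)).det : ℂ))⁻¹ • mulVecC (jac F (G x)) (curl3 E (G x)) := by
  have hGat : ∀ x ∈ Ωt, ContDiffAt ℝ 2 G x := fun x hx => hG.contDiffAt (hΩt.mem_nhds hx)
  have hFat : ∀ y ∈ Ω, ContDiffAt ℝ 2 F y := fun y hy => hF.contDiffAt (hΩ.mem_nhds hy)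
  have hEat : ∀ y ∈ Ω, ContDiffAt ℝ 1 E y := fun y hy => hE.contDiffAt (hΩ.mem_nhds hy)
  have hMN : ∀ x ∈ Ωt, jac F (G x) * jac G x = 1 := fun x hx =>
    jac_mul_jac_of_leftInverse hΩt hFG hx
      ((hFat _ (hGmaps hx)).differentiableAt (by norm_num))
      ((hGat x hx).differentiableAt (by norm_num))
  have hEt' : ∀ x ∈ Ωt, Et x = fun j => ∑ k, ((jac G x k j : ℝ) : ℂ) * E (G x) k := by
    intro x hx
    rw [hEt x hx, ← Matrix.transpose_nonsing_inv, Matrix.inv_eq_right_inv (hMN x hx)]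
    rfl
  constructor
  · refine ContDiffOn.congr ?_ hEt'
    intro x hx
    refine ContDiffAt.contDiffWithinAt (contDiffAt_pi.2 fun j => ContDiffAt.sum fun k _ => ?_)
    refine (contDiffAt_jac (hGat x hx) k j).mul ?_
    exact (contDiffAt_pi.1 (hEat _ (hGmaps hx)) k).comp x ((hGat x hx).of_le (by norm_num))
  · intro x hx
    have hcurl : curl3 Et x =
        curl3 (fun z j => ∑ k, ((jac G z k j : ℝ) : ℂ) * E (G z) k) x := by
      have hpd : ∀ i j, pd i (fun z => Et z j) x =
          pd i (fun z => ∑ k, ((jac G z k j : ℝ) : ℂ) * E (G z) k) x := by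
        intro i j
        have h : (fun z => Et z j) =ᶠ[nhds x]
            fun z => ∑ k, ((jac G z k j : ℝ) : ℂ) * E (G z) k :=
          Filter.eventually_of_mem (hΩt.mem_nhds hx) fun z hz => congrFun (hEt' z hz) j
        rw [pd, pd, h.fderiv_eq]
      simp only [curl3, hpd]
    have hadj : (jac G x).adjugate = (jac F (G x)).det⁻¹ • jac F (G x) := by
      have hd : (jac F (G x)).det ≠ 0 := (hdet _ (hGmaps hx)).ne'
      rw [← Matrix.inv_eq_right_inv (hMN x hx), Matrix.inv_def, Ring.inverse_eq_inv',
        Matrix.adjugate_smul, Matrix.adjugate_adjugate _ (by simp), smul_smul]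
      congr 1
      norm_num [Fintype.card_fin]
      field_simp
    rw [hcurl, curl3_pullback_adjugate (hGat x hx)
      ((hEat _ (hGmaps hx)).differentiableAt (by norm_num)), hadj]
    ext a
    simp [mulVecC, Matrix.mulVec, dotProduct, Finset.mul_sum, mul_assoc]
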